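/- Zariski's main theorem (weak version): let f: X → Y be a birational projective morphism of noetherian integral schemes with Y normal. Then f_*𝒪_X = 𝒪_Y. -/

import Mathlib

open CategoryTheory CategoryTheory.Limits AlgebraicGeometry

attribute [local instance] MvPolynomial.gradedAlgebra

/-- Projective `n`-space `ℙⁿ_ℤ` over `ℤ`, as `Proj` of the standard graded polynomial
ring `ℤ[x₀, …, xₙ]`. -/
noncomputable def ProjectiveSpaceZ (n : ℕ) : Scheme :=
  AlgebraicGeometry.Proj (MvPolynomial.homogeneousSubmodule (Fin (n + 1)) ℤ)

/-- Relative projective `n`-space `ℙⁿ_Y` over a scheme `Y`, i.e. the fiber product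
`ℙⁿ_ℤ ×_{Spec ℤ} Y` (recall `Spec ℤ` is the terminal scheme). -/
noncomputable def ProjectiveSpaceOver (n : ℕ) (Y : Scheme) : Scheme :=
  pullback (terminal.from (ProjectiveSpaceZ n)) (terminal.from Y)

/-- A morphism of schemes `f : X ⟶ Y` is projective if it factors as a closed
immersion into some relative projective space `ℙⁿ_Y` followed by the projection
to `Y`. -/
def IsProjectiveMorphism {X Y : Scheme} (f : X ⟶ Y) : Prop :=
  ∃ (n : ℕ) (ι : X ⟶ ProjectiveSpaceOver n Y),
    IsClosedImmersion ι ∧ ι ≫ pullback.snd _ _ = f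

/-- A morphism of irreducible schemes is birational if it sends the generic point to
the generic point and induces an isomorphism of the stalks there; for integral
schemes the stalk at the generic point is the function field, so this says that `f`
induces an isomorphism of function fields. -/
def IsBirationalMorphism {X Y : Scheme} [IrreducibleSpace X] [IrreducibleSpace Y]
    (f : X ⟶ Y) : Prop :=
  f.base (genericPoint X) = genericPoint Y ∧ IsIso (f.stalkMap (genericPoint X))

/-- A scheme is normal if all of its local rings are integrally closed domains. -/
def IsNormalScheme (Y : Scheme) : Prop :=
  ∀ y : Y, IsDomain (Y.presheaf.stalk y) ∧ IsIntegrallyClosed (Y.presheaf.stalk y)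

/-!
Over an affine open `U` of `Y` the ring `Γ(X, f⁻¹U)` is integral over `Γ(Y, U)`, because `f` is
universally closed. It embeds into `K(X)`, in which `K(Y)` is integrally closed, so its elements lie
in `K(Y)`, hence in `Γ(Y, U)`, which is integrally closed in its fraction field `K(Y)`. Thus
`𝒪_Y → f_*𝒪_X` is bijective on affine opens.
-/

universe u

section IntegralClosure

theorem isIntegrallyClosedIn_trans (R A B : Type*) [CommRing R] [CommRing A] [CommRing B]
    [Algebra R A] [Algebra A B] [Algebra R B] [IsScalarTower R A B]
    [IsIntegrallyClosedIn R A] [IsIntegrallyClosedIn A B] : IsIntegrallyClosedIn R B := by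
  have hRA := IsIntegralClosure.algebraMap_injective R R A
  have hAB := IsIntegralClosure.algebraMap_injective A A B
  refine isIntegrallyClosedIn_iff.mpr ⟨?_, fun {b} hb ↦ ?_⟩
  · rw [IsScalarTower.algebraMap_eq R A B]
    exact hAB.comp hRA
  · obtain ⟨a, rfl⟩ := IsIntegrallyClosedIn.isIntegral_iff.mp (hb.tower_top (A := A))
    obtain ⟨r, rfl⟩ := IsIntegrallyClosedIn.isIntegral_iff.mp
      ((isIntegral_algebraMap_iff hAB).mp hb)
    exact ⟨r, IsScalarTower.algebraMap_apply R A B r⟩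

theorem isIntegrallyClosedIn_of_bijective {R A : Type*} [CommRing R] [CommRing A] [Algebra R A]
    (h : Function.Bijective (algebraMap R A)) : IsIntegrallyClosedIn R A :=
  isIntegrallyClosedIn_iff.mpr ⟨h.injective, fun _ ↦ h.surjective _⟩

theorem algebraMap_bijective_of_isIntegrallyClosedIn (R A : Type*) [CommRing R] [CommRing A]
    [Algebra R A] [IsIntegrallyClosedIn R A] [Algebra.IsIntegral R A] :
    Function.Bijective (algebraMap R A) :=
  ⟨IsIntegralClosure.algebraMap_injective R R A,
    fun a ↦ IsIntegrallyClosedIn.isIntegral_iff.mp (Algebra.IsIntegral.isIntegral a)⟩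

end IntegralClosure

section Projective

theorem algebraMap_homogeneousSubmodule_zero_surjective (σ R : Type*) [CommRing R] :
    Function.Surjective (algebraMap R (MvPolynomial.homogeneousSubmodule σ R 0)) := by
  rintro ⟨p, hp⟩
  rw [MvPolynomial.homogeneousSubmodule_zero] at hp
  obtain ⟨r, rfl⟩ := Submodule.mem_one.mp hp
  exact ⟨r, rfl⟩

theorem isProper_proj_homogeneousSubmodule (σ R : Type u) [Finite σ] [CommRing R] :
    IsProper (Proj.toSpecZero (MvPolynomial.homogeneousSubmodule σ R) ≫
      Spec.map (CommRingCat.ofHom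
        (algebraMap R (MvPolynomial.homogeneousSubmodule σ R 0)))) := by
  have : IsScalarTower R (MvPolynomial.homogeneousSubmodule σ R 0) (MvPolynomial σ R) :=
    ⟨fun r a p ↦ smul_mul_assoc r (a : MvPolynomial σ R) p⟩
  have : Algebra.FiniteType (MvPolynomial.homogeneousSubmodule σ R 0) (MvPolynomial σ R) :=
    Algebra.FiniteType.of_restrictScalars_finiteType R _ _
  have := IsClosedImmersion.spec_of_surjective
    (CommRingCat.ofHom (algebraMap R (MvPolynomial.homogeneousSubmodule σ R 0)))
    (algebraMap_homogeneousSubmodule_zero_surjective σ R)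
  infer_instance

theorem isProper_terminal_from_projectiveSpaceZ (n : ℕ) :
    IsProper (terminal.from (ProjectiveSpaceZ n)) := by
  have hproper := isProper_proj_homogeneousSubmodule (Fin (n + 1)) ℤ
  have : IsIso (terminal.from (Spec (CommRingCat.of ℤ))) :=
    isIso_of_isTerminal specZIsTerminal terminalIsTerminal _
  rw [ProjectiveSpaceZ, ← terminal.comp_from
    (Proj.toSpecZero (MvPolynomial.homogeneousSubmodule (Fin (n + 1)) ℤ) ≫ Spec.map _)]
  exact MorphismProperty.comp_mem @IsProper _ _ hproper inferInstance

theorem IsProjectiveMorphism.isProper {X Y : Scheme} {f : X ⟶ Y} (hf : IsProjectiveMorphism f) :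
    IsProper f := by
  obtain ⟨n, ι, hι, rfl⟩ := hf
  have := isProper_terminal_from_projectiveSpaceZ n
  have : IsProper (pullback.snd (terminal.from (ProjectiveSpaceZ n)) (terminal.from Y)) :=
    inferInstance
  exact MorphismProperty.comp_mem @IsProper ι _ inferInstance this

end Projective

section Normal

variable {X Y : Scheme.{u}}

theorem isIntegral_app_of_isAffineOpen (f : X ⟶ Y) [UniversallyClosed f] {U : Y.Opens}
    (hU : IsAffineOpen U) : (f.app U).hom.IsIntegral := by
  have : IsAffine U := hU
  have h : (f.app (U.ι ''ᵁ ⊤) ≫ X.presheaf.map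
      (eqToHom (image_morphismRestrict_preimage f U ⊤)).op).hom.IsIntegral :=
    morphismRestrict_appTop f U ▸ isIntegral_appTop_of_universallyClosed (f ∣_ U)
  rw [CommRingCat.hom_comp, RingHom.isIntegral_respectsIso.cancel_right_isIso] at h
  exact U.ι_image_top ▸ h

theorem IsNormalScheme.isIntegrallyClosed_of_isAffineOpen [IsIntegral Y] (hY : IsNormalScheme Y)
    {U : Y.Opens} [Nonempty U] (hU : IsAffineOpen U) : IsIntegrallyClosed Γ(Y, U) := by
  have hmem (P : PrimeSpectrum Γ(Y, U)) : hU.fromSpec P ∈ U :=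
    hU.range_fromSpec.subset ⟨P, rfl⟩
  refine IsIntegrallyClosed.of_localization_maximal fun P _ _ ↦ ?_
  let p : PrimeSpectrum Γ(Y, U) := ⟨P, inferInstance⟩
  let := Y.presheaf.algebra_section_stalk ⟨hU.fromSpec p, hmem p⟩
  have : IsLocalization.AtPrime (Y.presheaf.stalk (hU.fromSpec p)) P :=
    hU.isLocalization_stalk' p (hmem p)
  have := (hY (hU.fromSpec p)).2
  exact .of_equiv (IsLocalization.algEquiv P.primeCompl
    (Y.presheaf.stalk (hU.fromSpec p)) (Localization.AtPrime P)).toRingEquiv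

theorem isFractionRing_stalk_of_eq_genericPoint [IsIntegral Y] {U : Y.Opens}
    (hU : IsAffineOpen U) (y : U) (hy : y = genericPoint Y) :
    IsFractionRing Γ(Y, U) (Y.presheaf.stalk y) := by
  obtain ⟨_, hyU⟩ := y
  subst hy
  have : Nonempty U := ⟨⟨_, hyU⟩⟩
  exact functionField_isFractionRing_of_isAffineOpen Y U hU

/-- The function field of `Y` is integrally closed in that of `X`, as for birational `f` or, more
generally, for `f` with `K(Y)` algebraically closed in `K(X)`. As in `IsBirationalMorphism`, `K(Y)`
enters as the stalk at the image of the generic point of `X`, so that the extension is literally a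
stalk map of `f`. -/
def IsGenericallyIntegrallyClosed [IrreducibleSpace X] [IrreducibleSpace Y] (f : X ⟶ Y) : Prop :=
  f (genericPoint X) = genericPoint Y ∧
    letI := (f.stalkMap (genericPoint X)).hom.toAlgebra
    IsIntegrallyClosedIn (Y.presheaf.stalk (f (genericPoint X))) X.functionField

theorem IsBirationalMorphism.isGenericallyIntegrallyClosed
    [IrreducibleSpace X] [IrreducibleSpace Y] {f : X ⟶ Y} (hf : IsBirationalMorphism f) :
    IsGenericallyIntegrallyClosed f := by
  let := (f.stalkMap (genericPoint X)).hom.toAlgebra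
  exact ⟨hf.1, isIntegrallyClosedIn_of_bijective
    ((ConcreteCategory.isIso_iff_bijective (f.stalkMap (genericPoint X))).mp hf.2)⟩

theorem IsGenericallyIntegrallyClosed.isIntegrallyClosedIn_app [IsIntegral X] [IsIntegral Y]
    {f : X ⟶ Y} (hf : IsGenericallyIntegrallyClosed f) (hY : IsNormalScheme Y) {U : Y.Opens}
    [Nonempty U] (hU : IsAffineOpen U) :
    letI := (f.app U).hom.toAlgebra
    IsIntegrallyClosedIn Γ(Y, U) Γ(X, f ⁻¹ᵁ U) := by
  have hξU : f (genericPoint X) ∈ U := by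
    rw [hf.1]
    exact ((genericPoint_spec Y).mem_open_set_iff U.isOpen).mpr (by simpa using ‹Nonempty U›)
  let K := Y.presheaf.stalk (f (genericPoint X))
  let : Algebra Γ(Y, U) Γ(X, f ⁻¹ᵁ U) := (f.app U).hom.toAlgebra
  let : Algebra K X.functionField := (f.stalkMap (genericPoint X)).hom.toAlgebra
  let : Algebra Γ(Y, U) K := Y.presheaf.algebra_section_stalk ⟨f (genericPoint X), hξU⟩
  let : Algebra Γ(X, f ⁻¹ᵁ U) X.functionField :=
    X.presheaf.algebra_section_stalk (U := f ⁻¹ᵁ U) ⟨genericPoint X, hξU⟩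
  let : Algebra Γ(Y, U) X.functionField :=
    (Y.presheaf.germ U _ hξU ≫ f.stalkMap (genericPoint X)).hom.toAlgebra
  have : IsScalarTower Γ(Y, U) K X.functionField := .of_algebraMap_eq' rfl
  have : IsScalarTower Γ(Y, U) Γ(X, f ⁻¹ᵁ U) X.functionField :=
    .of_algebraMap_eq' congr(($(f.germ_stalkMap U (genericPoint X) hξU)).hom)
  have : IsFractionRing Γ(Y, U) K :=
    isFractionRing_stalk_of_eq_genericPoint hU ⟨f (genericPoint X), hξU⟩ hf.1
  have : IsIntegrallyClosedIn Γ(Y, U) K :=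
    (isIntegrallyClosed_iff_isIntegrallyClosedIn K).mp (hY.isIntegrallyClosed_of_isAffineOpen hU)
  have : IsIntegrallyClosedIn K X.functionField := hf.2
  exact AlgHom.isIntegrallyClosedIn (IsScalarTower.toAlgHom Γ(Y, U) Γ(X, f ⁻¹ᵁ U) X.functionField)
    (germ_injective_of_isIntegral X _ hξU)
    (isIntegrallyClosedIn_trans Γ(Y, U) K X.functionField)

theorem isIso_c_of_isIso_app_affineOpens (f : X ⟶ Y)
    (hf : ∀ U : Y.Opens, IsAffineOpen U → Nonempty U → IsIso (f.app U)) : IsIso f.c := by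
  let φ : Y.sheaf ⟶ (TopCat.Sheaf.pushforward _ f.base).obj X.sheaf := ⟨f.c⟩
  have : IsIso φ := by
    refine TopCat.Sheaf.isIso_iff_isIso_basis (B := fun U : Y.affineOpens ↦ U.1)
      (by simpa only [Subtype.range_val] using Y.isBasis_affineOpens) fun ⟨U, hU⟩ ↦ ?_
    cases isEmpty_or_nonempty U with
    | inl hempty =>
      obtain rfl : U = ⊥ := TopologicalSpace.Opens.coe_eq_empty.mp (Set.isEmpty_coe_sort.mp hempty)
      have : Subsingleton Γ(X, f ⁻¹ᵁ ⊥) := inferInstanceAs (Subsingleton Γ(X, ⊥))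
      exact (ConcreteCategory.isIso_iff_bijective (f.app ⊥)).mpr
        ⟨Function.injective_of_subsingleton _, Function.surjective_to_subsingleton _⟩
    | inr hnonempty => exact hf U hU hnonempty
  exact inferInstanceAs (IsIso ((TopCat.Sheaf.forget CommRingCat Y).map φ))

theorem zariski_main_theorem_weak_general [IsIntegral X] [IsIntegral Y]
    (f : X ⟶ Y) [UniversallyClosed f] (hgen : IsGenericallyIntegrallyClosed f)
    (hnormal : IsNormalScheme Y) : IsIso f.c := by
  refine isIso_c_of_isIso_app_affineOpens f fun U hU _ ↦ ?_
  let := (f.app U).hom.toAlgebra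
  have := hgen.isIntegrallyClosedIn_app hnormal hU
  have : Algebra.IsIntegral Γ(Y, U) Γ(X, f ⁻¹ᵁ U) := ⟨isIntegral_app_of_isAffineOpen f hU⟩
  exact (ConcreteCategory.isIso_iff_bijective (f.app U)).mpr
    (algebraMap_bijective_of_isIntegrallyClosedIn Γ(Y, U) Γ(X, f ⁻¹ᵁ U))

end Normal

/-- **Zariski's main theorem, weak version.**
Let `f : X ⟶ Y` be a birational projective morphism of noetherian integral schemes
with `Y` normal.  Then `f_*𝒪_X = 𝒪_Y`, i.e. the natural map
`𝒪_Y → f_*𝒪_X` (the component `f.c` of the morphism) is an isomorphism. -/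
theorem zariski_main_theorem_weak
    {X Y : Scheme} [IsIntegral X] [IsIntegral Y]
    [AlgebraicGeometry.IsNoetherian X] [AlgebraicGeometry.IsNoetherian Y]
    (f : X ⟶ Y)
    (hproj : IsProjectiveMorphism f)
    (hbir : IsBirationalMorphism f)
    (hnormal : IsNormalScheme Y) :
    IsIso f.c :=
  have := hproj.isProper
  zariski_main_theorem_weak_general f hbir.isGenericallyIntegrallyClosed hnormal
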